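/- Let R be a subring of a field F and let r ∈ R with r ≠ 0, and let R[1/r] denote the subring of F generated by R and 1/r. Then E₂(R[1/r]) is contained in the subgroup of SL₂(F) generated by SL₂(R) ∪ D(1/r,1)·SL₂(R)·D(r,1), and this subgroup is contained in SL₂(R[1/r]). -/

import Mathlib

/-!
Write `H` for the subgroup generated by `SL₂(R)` and its conjugate by `D(1/r,1)`.

The Weyl element `w = [[0, 1], [-1, 0]]` lies in `SL₂(R)`, and multiplying its conjugate
`[[0, 1/r], [-r, 0]]` by `w⁻¹` shows that `H` contains the diagonal matrix `t = D(1/r, r)`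
(`diag_mem`). Since `t E₁₂(x) t⁻¹ = E₁₂(x / r²)`, the set of `x` with `E₁₂(x) ∈ H` is stable under
division by `r²`. Every element of `R[1/r]` is of the form `a / r²ⁿ` with `a ∈ R`
(`exists_mul_pow_mem`), so `H` contains all `E₁₂(x)` with `x ∈ R[1/r]`, and, conjugating by `w`,
all `E₂₁(x)` too. The second inclusion is read off the entries of the generators.
-/

open Matrix Pointwise

noncomputable section

/-- `SL₂` over a commutative ring. -/
abbrev SL2 (A : Type*) [CommRing A] := Matrix.SpecialLinearGroup (Fin 2) A

/-- The elementary matrix `E₁₂(r) = [[1, r], [0, 1]]`. -/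
def E12 {A : Type*} [CommRing A] (r : A) : SL2 A :=
  ⟨!![1, r; 0, 1], by simp [Matrix.det_fin_two_of]⟩

/-- The elementary matrix `E₂₁(r) = [[1, 0], [r, 1]]`. -/
def E21 {A : Type*} [CommRing A] (r : A) : SL2 A :=
  ⟨!![1, 0; r, 1], by simp [Matrix.det_fin_two_of]⟩

/-- `SL₂(S)` identified with the subgroup of `SL₂(F)` of matrices with entries in the
subring `S` of the field `F` (the image of `SL₂(S) → SL₂(F)`). -/
def SL2In {F : Type*} [Field F] (S : Subring F) : Subgroup (SL2 F) :=
  (Matrix.SpecialLinearGroup.map S.subtype).range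

/-- `E₂(S)`: the subgroup of `SL₂(F)` generated by the elementary matrices with
entry in the subring `S`. -/
def E2 {F : Type*} [Field F] (S : Subring F) : Subgroup (SL2 F) :=
  Subgroup.closure {g | ∃ r ∈ S, g = E12 r ∨ g = E21 r}

/-- The set `D(1/π,1)·Γ·D(π,1)` of conjugates inside `SL₂(F)`. -/
def conjSet {F : Type*} [Field F] (π : F) (Γ : Subgroup (SL2 F)) : Set (SL2 F) :=
  {g | ∃ h ∈ Γ, (g : Matrix (Fin 2) (Fin 2) F) =
    !![π⁻¹, 0; 0, 1] * (h : Matrix (Fin 2) (Fin 2) F) * !![π, 0; 0, 1]}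

theorem mem_SL2In_iff {F : Type*} [Field F] (S : Subring F) (g : SL2 F) :
    g ∈ SL2In S ↔ ∀ i j, g i j ∈ S := by
  constructor
  · rintro ⟨h, rfl⟩ i j
    simp
  · intro hg
    refine ⟨⟨Matrix.of fun i j => ⟨g i j, hg i j⟩, ?_⟩, ?_⟩
    · apply Subtype.ext
      have hdet := g.det_coe
      rw [Matrix.det_fin_two] at hdet ⊢
      simpa using hdet
    · exact Matrix.SpecialLinearGroup.ext _ _ fun i j => rfl

/-- The Weyl element `[[0, 1], [-1, 0]]`, which interchanges the two kinds of elementary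
matrices. -/
def weyl (A : Type*) [CommRing A] : SL2 A :=
  ⟨!![0, 1; -1, 0], by simp [Matrix.det_fin_two_of]⟩

/-- The diagonal matrix `D(1/r, r)`. -/
def diagInv {F : Type*} [Field F] (r : F) (hr0 : r ≠ 0) : SL2 F :=
  ⟨!![r⁻¹, 0; 0, r], by simp [Matrix.det_fin_two_of, hr0]⟩

theorem weyl_mem {F : Type*} [Field F] (S : Subring F) : weyl F ∈ SL2In S := by
  rw [mem_SL2In_iff]
  intro i j
  fin_cases i <;> fin_cases j <;> simp [weyl, S.one_mem, S.zero_mem]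

theorem E12_mem {F : Type*} [Field F] (S : Subring F) {x : F} (hx : x ∈ S) :
    E12 x ∈ SL2In S := by
  rw [mem_SL2In_iff]
  intro i j
  fin_cases i <;> fin_cases j <;> simp [E12, S.one_mem, S.zero_mem, hx]

theorem diag_mem {F : Type*} [Field F] (R : Subring F) (r : F) (hr0 : r ≠ 0) :
    diagInv r hr0 ∈ Subgroup.closure (↑(SL2In R) ∪ conjSet r (SL2In R)) := by
  have hw : weyl F ∈ Subgroup.closure (↑(SL2In R) ∪ conjSet r (SL2In R)) :=
    Subgroup.subset_closure (Or.inl (weyl_mem R))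
  have hc : diagInv r hr0 * weyl F ∈ conjSet r (SL2In R) := by
    refine ⟨weyl F, weyl_mem R, ?_⟩
    rw [Matrix.SpecialLinearGroup.coe_mul]
    ext i j
    fin_cases i <;> fin_cases j <;> simp [weyl, diagInv]
  exact (Subgroup.mul_mem_cancel_right _ hw).1 (Subgroup.subset_closure (Or.inr hc))

theorem diagInv_conj {F : Type*} [Field F] (r : F) (hr0 : r ≠ 0) (x : F) :
    diagInv r hr0 * E12 (x * r ^ 2) * (diagInv r hr0)⁻¹ = E12 x := by
  rw [mul_inv_eq_iff_eq_mul]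
  refine Matrix.SpecialLinearGroup.ext _ _ fun i j => ?_
  rw [Matrix.SpecialLinearGroup.coe_mul, Matrix.SpecialLinearGroup.coe_mul]
  fin_cases i <;> fin_cases j <;>
    simp [diagInv, E12]
  field_simp

theorem weyl_conj {A : Type*} [CommRing A] (x : A) :
    (weyl A)⁻¹ * E12 (-x) * weyl A = E21 x := by
  rw [mul_assoc, inv_mul_eq_iff_eq_mul]
  refine Matrix.SpecialLinearGroup.ext _ _ fun i j => ?_
  rw [Matrix.SpecialLinearGroup.coe_mul, Matrix.SpecialLinearGroup.coe_mul]
  fin_cases i <;> fin_cases j <;> simp [weyl, E12, E21]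

/-- Elements of `R[1/r]` are fractions with a power of `r` as denominator. -/
theorem exists_mul_pow_mem {F : Type*} [Field F] (R : Subring F) (r : F) (hr : r ∈ R)
    (hr0 : r ≠ 0) {x : F} (hx : x ∈ Subring.closure (↑R ∪ {r⁻¹} : Set F)) :
    ∃ n : ℕ, x * r ^ n ∈ R := by
  induction hx using Subring.closure_induction with
  | mem x hx =>
    rcases hx with hx | rfl
    · exact ⟨0, by simpa using hx⟩
    · exact ⟨1, by simp [hr0, R.one_mem]⟩
  | zero => exact ⟨0, by simp [R.zero_mem]⟩
  | one => exact ⟨0, by simp [R.one_mem]⟩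
  | add x y _ _ hx hy =>
    obtain ⟨n, hn⟩ := hx
    obtain ⟨m, hm⟩ := hy
    refine ⟨n + m, ?_⟩
    have h := R.add_mem (R.mul_mem hn (R.pow_mem hr m)) (R.mul_mem hm (R.pow_mem hr n))
    convert h using 1
    ring
  | neg x _ hx =>
    obtain ⟨n, hn⟩ := hx
    exact ⟨n, by simpa using hn⟩
  | mul x y _ _ hx hy =>
    obtain ⟨n, hn⟩ := hx
    obtain ⟨m, hm⟩ := hy
    refine ⟨n + m, ?_⟩
    convert R.mul_mem hn hm using 1
    ring

theorem E12_mem_closure {F : Type*} [Field F] (R : Subring F) (r : F) (hr0 : r ≠ 0) (n : ℕ) :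
    ∀ x : F, x * (r ^ 2) ^ n ∈ R →
      E12 x ∈ Subgroup.closure (↑(SL2In R) ∪ conjSet r (SL2In R)) := by
  induction n with
  | zero =>
    intro x hx
    exact Subgroup.subset_closure (Or.inl (E12_mem R (by simpa using hx)))
  | succ n ih =>
    intro x hx
    have h := ih (x * r ^ 2) (by convert hx using 1; ring)
    have ht := diag_mem R r hr0
    rw [← diagInv_conj r hr0 x]
    exact Subgroup.mul_mem _ (Subgroup.mul_mem _ ht h) (Subgroup.inv_mem _ ht)

/-- For a subring `R` of a field `F` and `0 ≠ r ∈ R`, `E₂(R[1/r])` is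
contained in the subgroup of `SL₂(F)` generated by `SL₂(R) ∪ D(1/r,1)·SL₂(R)·D(r,1)`,
which in turn is contained in `SL₂(R[1/r])`. -/
theorem statement10 (F : Type*) [Field F] (R : Subring F) (r : F) (hr : r ∈ R) (hr0 : r ≠ 0) :
    E2 (Subring.closure (↑R ∪ {r⁻¹})) ≤
        Subgroup.closure (↑(SL2In R) ∪ conjSet r (SL2In R)) ∧
      Subgroup.closure (↑(SL2In R) ∪ conjSet r (SL2In R)) ≤
        SL2In (Subring.closure (↑R ∪ {r⁻¹})) := by
  constructor
  · have key : ∀ x ∈ Subring.closure (↑R ∪ {r⁻¹} : Set F),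
        E12 x ∈ Subgroup.closure (↑(SL2In R) ∪ conjSet r (SL2In R)) := by
      intro x hx
      obtain ⟨n, hn⟩ := exists_mul_pow_mem R r hr hr0 hx
      -- Only even powers of `r` can be cleared, so the denominator `r ^ n` is squared.
      refine E12_mem_closure R r hr0 n x ?_
      convert R.mul_mem hn (R.pow_mem hr n) using 1
      ring
    rw [E2, Subgroup.closure_le]
    rintro g ⟨x, hx, rfl | rfl⟩
    · exact key x hx
    · have hw : weyl F ∈ Subgroup.closure (↑(SL2In R) ∪ conjSet r (SL2In R)) :=
        Subgroup.subset_closure (Or.inl (weyl_mem R))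
      rw [← weyl_conj x]
      exact Subgroup.mul_mem _ (Subgroup.mul_mem _ (Subgroup.inv_mem _ hw)
        (key _ (Subring.neg_mem _ hx))) hw
  · have hR : ∀ x ∈ R, x ∈ Subring.closure (↑R ∪ {r⁻¹} : Set F) :=
      fun x hx => Subring.subset_closure (Or.inl hx)
    have hi : r⁻¹ ∈ Subring.closure (↑R ∪ {r⁻¹} : Set F) :=
      Subring.subset_closure (Or.inr rfl)
    rw [Subgroup.closure_le]
    rintro g (hg | ⟨h, hh, hg⟩)
    · exact (mem_SL2In_iff _ _).2 fun i j => hR _ ((mem_SL2In_iff R g).1 hg i j)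
    · refine (mem_SL2In_iff _ _).2 fun i j => ?_
      have hh' := fun i j => hR _ ((mem_SL2In_iff R h).1 hh i j)
      rw [hg, Matrix.mul_apply]
      simp only [Matrix.mul_apply]
      refine Subring.sum_mem _ fun k _ => Subring.mul_mem _
        (Subring.sum_mem _ fun l _ => Subring.mul_mem _ ?_ (hh' l k)) ?_
      · fin_cases i <;> fin_cases l <;> simpa using hi
      · fin_cases k <;> fin_cases j <;> simpa using hR r hr
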